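/- Let q* ∈ D satisfy Δ(q*) = 0, ∇Δ(q*) ≠ 0, a(q*) ≠ 0, and (a·Δ_t − b·Δ_x)(q*) ≠ 0, and set p₀ = −b(q*)/a(q*) (the isotropic direction at the parabolic point q*). Then V(q*, p₀) = 0, and the germ of V at the singular point (q*, p₀) is C^∞-smoothly orbitally equivalent to the germ at 0 of the vector field ξ̇ = 2ξ, η̇ = η, ζ̇ = 0. -/

import Mathlib

open Filter Topology

/-- Partial derivative of `g : ℝ² → ℝ` with respect to the first coordinate. -/
noncomputable def d1 (g : ℝ × ℝ → ℝ) (q : ℝ × ℝ) : ℝ := fderiv ℝ g q ((1 : ℝ), (0 : ℝ))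

/-- Partial derivative of `g : ℝ² → ℝ` with respect to the second coordinate. -/
noncomputable def d2 (g : ℝ × ℝ → ℝ) (q : ℝ × ℝ) : ℝ := fderiv ℝ g q ((0 : ℝ), (1 : ℝ))

/-- Two vector fields `V`, `N` with marked points `x₀`, `y₀` are `C^∞`-smoothly orbitally
equivalent (as germs) if there are open neighborhoods `U ∋ x₀`, `U' ∋ y₀` with `U`
contained in the domain `Dom`, a `C^∞` diffeomorphism `Φ : U → U'` with `Φ x₀ = y₀`, and
a `C^∞` nowhere-vanishing function `h : U → ℝ` with `DΦ(x)·V(x) = h(x)·N(Φ(x))` on `U`. -/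
def OrbEquiv {E : Type*} [NormedAddCommGroup E] [NormedSpace ℝ E]
    (Dom : Set E) (V N : E → E) (x₀ y₀ : E) : Prop :=
  ∃ (U U' : Set E) (Φ Ψ : E → E) (h : E → ℝ),
    IsOpen U ∧ IsOpen U' ∧ x₀ ∈ U ∧ y₀ ∈ U' ∧ U ⊆ Dom ∧
    ContDiffOn ℝ (⊤ : ℕ∞) Φ U ∧ ContDiffOn ℝ (⊤ : ℕ∞) Ψ U' ∧
    Φ x₀ = y₀ ∧ Set.MapsTo Φ U U' ∧ Set.MapsTo Ψ U' U ∧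
    (∀ x ∈ U, Ψ (Φ x) = x) ∧ (∀ y ∈ U', Φ (Ψ y) = y) ∧
    ContDiffOn ℝ (⊤ : ℕ∞) h U ∧ (∀ x ∈ U, h x ≠ 0) ∧
    ∀ x ∈ U, fderiv ℝ Φ x (V x) = h x • N (Φ x)

/-!
With `k = Δ_t + p Δ_x`, the coordinates `ξ = Δ`, `η = a p + b`, `ζ = (x - x₀) - p₀ (t - t₀)` turn
the geodesic field into `k / 2` times `(2 ξ, η + (η² - ξ) α, ξ γ)` with smooth `α` and `γ`. Its
linear part `A` generates the dilations `δ_τ = diag(τ², τ, 1)`, which extend smoothly to `τ = 0`,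
and the perturbation `P` satisfies `P ∘ δ_τ = τ δ_τ R_τ` with `R` smooth also at `τ = 0`. Because
`R_τ ∘ δ_σ = σ δ_σ R_{στ}`, the flow `u` of `u' = R_τ(u)` satisfies `u(τ, δ_σ x) = δ_σ u(στ, x)`.
For small `ε ≠ 0` the map `x ↦ δ_ε u(ε, x)` is therefore a local diffeomorphism conjugating `A` to
`A + P`, as differentiation in `σ` at `σ = 1` shows.

The flow of a smooth vector field `f` is smooth by the implicit function theorem applied to
`v - x - t ∫ f(v)` on the Banach space of continuous curves `v` over the unit interval, where `t`
enters as a parameter through rescaling of time.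
-/

open scoped ContDiff

section ImplicitFunction

variable {W X : Type*} [NormedAddCommGroup W] [NormedSpace ℝ W] [CompleteSpace W]
  [NormedAddCommGroup X] [NormedSpace ℝ X] [CompleteSpace X]

theorem contDiffAt_of_eventually_apply_eq {G : W × X → X} {c : W → X} {w : W} {n : ℕ∞ω}
    (hn : n ≠ 0) (hG : ContDiffAt ℝ n G (w, c w))
    (hinv : (fderiv ℝ G (w, c w) ∘L .inr ℝ W X).IsInvertible) (hc : ContinuousAt c w)
    (hGc : ∀ᶠ w' in 𝓝 w, G (w', c w') = G (w, c w)) : ContDiffAt ℝ n c w := by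
  have hgraph : Tendsto (fun w' => (w', c w')) (𝓝 w) (𝓝 (w, c w)) :=
    continuousAt_id.prodMk hc
  have heq : hG.implicitFunction hn hinv =ᶠ[𝓝 w] c := by
    filter_upwards [hGc, hgraph.eventually (hG.eventually_apply_eq_iff_implicitFunction hn hinv)]
      with w' hw' hiff using hiff.1 hw'
  exact (hG.contDiffAt_implicitFunction hn hinv).congr_of_eventuallyEq heq.symm

theorem exists_contDiffAt_implicit {G : W × X → X} {w₀ : W} {x₀ : X} (hG : ContDiff ℝ ∞ G)
    (hinv : (fderiv ℝ G (w₀, x₀) ∘L .inr ℝ W X).IsInvertible) :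
    ∃ c : W → X, c w₀ = x₀ ∧
      (∀ᶠ w in 𝓝 w₀, ContDiffAt ℝ ∞ c w ∧ G (w, c w) = G (w₀, x₀)) ∧
      ∀ᶠ p in 𝓝 (w₀, x₀), G p = G (w₀, x₀) → p.2 = c p.1 := by
  have hG₀ : ContDiffAt ℝ ∞ G (w₀, x₀) := hG.contDiffAt
  have hne : (∞ : ℕ∞ω) ≠ 0 := by simp
  set c := hG₀.implicitFunction hne hinv
  have hc₀ : c w₀ = x₀ := hG₀.implicitFunction_apply_self hne hinv
  have hsmooth : ContDiffAt ℝ ∞ c w₀ := hG₀.contDiffAt_implicitFunction hne hinv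
  have hcont : ∀ᶠ w in 𝓝 w₀, ContinuousAt c w :=
    ((hsmooth.of_le (m := 1) (by simp)).eventually (by simp)).mono fun w hw => hw.continuousAt
  have hzero := hG₀.eventually_apply_implicitFunction hne hinv
  have hpartial : ContinuousAt (fun w => fderiv ℝ G (w, c w) ∘L .inr ℝ W X) w₀ := by
    have hG' : Continuous (fderiv ℝ G) := hG.continuous_fderiv (by simp)
    have := hsmooth.continuousAt
    fun_prop
  have hinv₀ : (fderiv ℝ G (w₀, c w₀) ∘L .inr ℝ W X).IsInvertible := by rwa [hc₀]
  have hinv' : ∀ᶠ w in 𝓝 w₀, (fderiv ℝ G (w, c w) ∘L .inr ℝ W X).IsInvertible :=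
    hpartial.eventually (ContinuousLinearEquiv.isOpen.mem_nhds hinv₀)
  refine ⟨c, hc₀, ?_, ?_⟩
  · filter_upwards [hcont, hinv', hzero.eventually_nhds] with w hcw hinvw hGw
    refine ⟨contDiffAt_of_eventually_apply_eq hne hG.contDiffAt hinvw hcw ?_, hGw.self_of_nhds⟩
    filter_upwards [hGw] with w' hw'
    exact hw'.trans hGw.self_of_nhds.symm
  · filter_upwards [hG₀.eventually_apply_eq_iff_implicitFunction hne hinv] with p hp hGp
    exact (hp.1 hGp).symm

end ImplicitFunction

section Nemytskii

universe u

variable {K : Type*} [TopologicalSpace K] [CompactSpace K]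

/-- Pointwise application of a continuous family of continuous linear maps to a continuous
function. -/
noncomputable def pointwiseApply (K : Type*) [TopologicalSpace K] [CompactSpace K]
    (E F : Type*) [NormedAddCommGroup E] [NormedSpace ℝ E]
    [NormedAddCommGroup F] [NormedSpace ℝ F] :
    C(K, E →L[ℝ] F) →L[ℝ] C(K, E) →L[ℝ] C(K, F) :=
  LinearMap.mkContinuous₂
    (LinearMap.mk₂ ℝ (fun (A : C(K, E →L[ℝ] F)) (u : C(K, E)) =>
        (⟨fun k => A k (u k), by fun_prop⟩ : C(K, F)))
      (fun _ _ _ => by ext; simp) (fun _ _ _ => by ext; simp)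
      (fun _ _ _ => by ext; simp) (fun _ _ _ => by ext; simp)) 1
    (fun A u => by
      rw [one_mul]
      refine (ContinuousMap.norm_le _ (by positivity)).2 fun k => ?_
      exact ((A k).le_opNorm _).trans (mul_le_mul (A.norm_coe_le_norm k) (u.norm_coe_le_norm k)
        (norm_nonneg (u k)) (norm_nonneg A)))

theorem hasFDerivAt_continuousMap_comp {E F : Type*}
    [NormedAddCommGroup E] [NormedSpace ℝ E] [NormedAddCommGroup F] [NormedSpace ℝ F]
    (f : C(E, F)) (f' : C(E, E →L[ℝ] F)) (hf : ∀ x, HasFDerivAt f (f' x) x) (u : C(K, E)) :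
    HasFDerivAt (fun v : C(K, E) => f.comp v) (pointwiseApply K E F (f'.comp u)) u := by
  refine HasFDerivAt.of_isLittleO (Asymptotics.isLittleO_iff.2 fun ε hε => ?_)
  have hunif := (isCompact_range u.continuous).uniformContinuousAt_of_continuousAt f'
    (fun x _ => f'.continuous.continuousAt) (Metric.dist_mem_uniformity hε)
  obtain ⟨δ, hδ, hδ'⟩ := Metric.mem_uniformity_dist.1 hunif
  filter_upwards [Metric.ball_mem_nhds u hδ] with v hv
  refine (ContinuousMap.norm_le _ (by positivity)).2 fun k => ?_
  have hvk : v k ∈ Metric.ball (u k) δ := (ContinuousMap.dist_apply_le_dist k).trans_lt hv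
  have key := (convex_ball (u k) δ).norm_image_sub_le_of_norm_hasFDerivWithin_le' (f := f)
    (f' := f') (φ := f' (u k)) (C := ε) (fun x _ => (hf x).hasFDerivWithinAt)
    (fun x hx => by
      have hxd : dist (u k) x < δ := by rw [dist_comm]; exact hx
      have := hδ' hxd ⟨k, rfl⟩
      rw [← dist_eq_norm, dist_comm]
      exact le_of_lt this)
    (Metric.mem_ball_self hδ) hvk
  refine key.trans (mul_le_mul_of_nonneg_left ?_ hε.le)
  exact (v - u).norm_coe_le_norm k

theorem contDiff_nat_continuousMap_comp {E : Type u} [NormedAddCommGroup E] [NormedSpace ℝ E]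
    (n : ℕ) : ∀ {F : Type u} [NormedAddCommGroup F] [NormedSpace ℝ F] (f : C(E, F)),
      ContDiff ℝ ∞ f → ContDiff ℝ n (fun v : C(K, E) => f.comp v) := by
  induction n with
  | zero =>
    intro F _ _ f _
    exact contDiff_zero.2 (ContinuousMap.continuous_postcomp f)
  | succ n ih =>
    intro F _ _ f hf
    have hf' : ContDiff ℝ ∞ (fderiv ℝ f) := hf.fderiv_right (by simp)
    have hB : ContDiff ℝ n (fun A => pointwiseApply K E F A) := ContinuousLinearMap.contDiff _
    refine contDiff_succ_iff_hasFDerivAt.2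
      ⟨fun u => pointwiseApply K E F ((⟨fderiv ℝ f, hf'.continuous⟩ : C(E, E →L[ℝ] F)).comp u),
        hB.comp (ih ⟨fderiv ℝ f, hf'.continuous⟩ hf'), fun u => ?_⟩
    exact hasFDerivAt_continuousMap_comp f _
      (fun x => (hf.differentiable (by simp) x).hasFDerivAt) u

theorem contDiff_continuousMap_comp {E F : Type u} [NormedAddCommGroup E] [NormedSpace ℝ E]
    [NormedAddCommGroup F] [NormedSpace ℝ F] (f : C(E, F)) (hf : ContDiff ℝ ∞ f) :
    ContDiff ℝ ∞ (fun v : C(K, E) => f.comp v) :=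
  contDiff_infty.2 fun n => contDiff_nat_continuousMap_comp n f hf

end Nemytskii

section Flow

open Set

variable {E : Type*} [NormedAddCommGroup E] [NormedSpace ℝ E]

/-- Integration from the left endpoint, as an operator on continuous curves over the unit
interval. The integrand is extended by constants to the real line. -/
noncomputable def volterra (E : Type*) [NormedAddCommGroup E] [NormedSpace ℝ E] :
    C(unitInterval, E) →L[ℝ] C(unitInterval, E) :=
  LinearMap.mkContinuous
    { toFun := fun u => ⟨fun τ => ∫ s in (0 : ℝ)..τ, IccExtend zero_le_one u s,
        (intervalIntegral.continuous_primitive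
          (fun _ _ => u.continuous.Icc_extend'.intervalIntegrable _ _)
          0).comp continuous_subtype_val⟩
      map_add' := fun u v => by
        ext τ
        exact intervalIntegral.integral_add (u.continuous.Icc_extend'.intervalIntegrable _ _)
          (v.continuous.Icc_extend'.intervalIntegrable _ _)
      map_smul' := fun c u => by
        ext τ
        exact intervalIntegral.integral_smul c _ } 1
    (fun u => by
      rw [one_mul]
      refine (ContinuousMap.norm_le _ (norm_nonneg _)).2 fun τ => ?_
      refine (intervalIntegral.norm_integral_le_of_norm_le_const
        (fun s _ => u.norm_coe_le_norm (projIcc 0 1 zero_le_one s))).trans ?_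
      have hτ : |(τ : ℝ) - 0| ≤ 1 := by
        rw [sub_zero, abs_of_nonneg τ.2.1]; exact τ.2.2
      exact mul_le_of_le_one_right (norm_nonneg _) hτ)

theorem volterra_apply (u : C(unitInterval, E)) (τ : unitInterval) :
    volterra E u τ = ∫ s in (0 : ℝ)..τ, IccExtend zero_le_one u s := rfl

/-- The curve `τ ↦ u (σ τ)`. -/
def rescaleTime {E : Type*} [TopologicalSpace E] (σ : unitInterval) (u : C(unitInterval, E)) :
    C(unitInterval, E) :=
  u.comp ⟨fun τ => σ * τ, by fun_prop⟩

@[simp]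
theorem rescaleTime_apply {E : Type*} [TopologicalSpace E] (σ : unitInterval)
    (u : C(unitInterval, E)) (τ : unitInterval) : rescaleTime σ u τ = u (σ * τ) := rfl

theorem smul_volterra_rescaleTime (σ : unitInterval) (u : C(unitInterval, E)) :
    (σ : ℝ) • volterra E (rescaleTime σ u) = rescaleTime σ (volterra E u) := by
  ext τ
  have hcongr : ∫ s in (0 : ℝ)..τ, IccExtend zero_le_one (rescaleTime σ u) s =
      ∫ s in (0 : ℝ)..τ, IccExtend zero_le_one u (σ * s) := by
    refine intervalIntegral.integral_congr fun s hs => ?_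
    rw [uIcc_of_le τ.2.1] at hs
    have hs' : s ∈ Icc (0 : ℝ) 1 := ⟨hs.1, hs.2.trans τ.2.2⟩
    have hσs : (σ : ℝ) * s ∈ Icc (0 : ℝ) 1 := unitInterval.mul_mem σ.2 hs'
    simp only [IccExtend_of_mem _ _ hs', IccExtend_of_mem _ _ hσs]
    rfl
  calc ((σ : ℝ) • volterra E (rescaleTime σ u)) τ
      = (σ : ℝ) • ∫ s in (0 : ℝ)..τ, IccExtend zero_le_one u (σ * s) := by
        rw [ContinuousMap.smul_apply, volterra_apply, hcongr]
    _ = ∫ s in (0 : ℝ)..(σ * τ), IccExtend zero_le_one u s := by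
        rw [intervalIntegral.smul_integral_comp_mul_left, mul_zero]

/-- The defect of a curve `v` over the unit interval as a solution of `v' = t • f v` with initial
value `x`, in integral form. -/
noncomputable def flowDefect (f : C(E, E)) (w : (ℝ × E) × C(unitInterval, E)) :
    C(unitInterval, E) :=
  w.2 - ContinuousLinearMap.const ℝ unitInterval w.1.2 - w.1.1 • volterra E (f.comp w.2)

theorem flowDefect_eq_zero_iff {f : C(E, E)} {t : ℝ} {x : E} {v : C(unitInterval, E)} :
    flowDefect f ((t, x), v) = 0 ↔
      ∀ τ : unitInterval, v τ = x + t • ∫ s in (0 : ℝ)..τ, IccExtend zero_le_one (f.comp v) s := by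
  rw [ContinuousMap.ext_iff]
  refine forall_congr' fun τ => ?_
  rw [← volterra_apply, ← sub_eq_zero (a := v τ), ← sub_sub]
  rfl

theorem flowDefect_zero_const (f : C(E, E)) (x : E) :
    flowDefect f ((0, x), ContinuousMap.const _ x) = 0 := by
  ext τ
  simp [flowDefect]

theorem flowDefect_rescaleTime {f : C(E, E)} {t : ℝ} {x : E} {v : C(unitInterval, E)}
    (hv : flowDefect f ((t, x), v) = 0) (σ : unitInterval) :
    flowDefect f ((σ * t, x), rescaleTime σ v) = 0 := by
  have hvolterra : (σ : ℝ) • volterra E (f.comp (rescaleTime σ v)) =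
      rescaleTime σ (volterra E (f.comp v)) := smul_volterra_rescaleTime σ (f.comp v)
  ext τ
  simpa [flowDefect, mul_comm (σ : ℝ), mul_smul, hvolterra] using DFunLike.congr_fun hv (σ * τ)

end Flow

section SmoothFlow

open Set

universe u

variable {E : Type u} [NormedAddCommGroup E] [NormedSpace ℝ E]

theorem contDiff_flowDefect {f : C(E, E)} (hf : ContDiff ℝ ∞ f) : ContDiff ℝ ∞ (flowDefect f) := by
  have hcomp := contDiff_continuousMap_comp (K := unitInterval) f hf
  unfold flowDefect
  fun_prop

theorem fderiv_flowDefect_comp_inr {f : C(E, E)} (hf : ContDiff ℝ ∞ f) (x : E)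
    (v : C(unitInterval, E)) :
    fderiv ℝ (flowDefect f) ((0, x), v) ∘L .inr ℝ (ℝ × E) C(unitInterval, E) = .id ℝ _ := by
  have hpartial : HasFDerivAt (fun u => flowDefect f ((0, x), u))
      (fderiv ℝ (flowDefect f) ((0, x), v) ∘L .inr ℝ (ℝ × E) C(unitInterval, E)) v :=
    ((contDiff_flowDefect hf).differentiable (by simp) _).hasFDerivAt.comp v
      (hasFDerivAt_prodMk_right _ v)
  refine hpartial.unique ?_
  simpa [flowDefect] using
    (hasFDerivAt_id v).sub_const (ContinuousLinearMap.const ℝ unitInterval x)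

variable [CompleteSpace E]

theorem exists_contDiffAt_solution_curve {f : C(E, E)} (hf : ContDiff ℝ ∞ f) (x₀ : E) :
    ∃ c : ℝ × E → C(unitInterval, E), ∃ r > 0,
      ∀ t ∈ Metric.ball (0 : ℝ) r, ∀ x ∈ Metric.ball x₀ r,
        ContDiffAt ℝ ∞ c (t, x) ∧ flowDefect f ((t, x), c (t, x)) = 0 ∧
        ∀ σ : unitInterval, c (σ * t, x) = rescaleTime σ (c (t, x)) := by
  obtain ⟨c, hc₀, hc, hunique⟩ := exists_contDiffAt_implicit (contDiff_flowDefect hf)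
    (w₀ := (0, x₀)) (x₀ := ContinuousMap.const _ x₀)
    ⟨.refl ℝ _, (fderiv_flowDefect_comp_inr hf x₀ _).symm⟩
  rw [flowDefect_zero_const] at hc hunique
  obtain ⟨ρ, hρ, hρu⟩ := Metric.eventually_nhds_iff_ball.1 hunique
  have hnear : ∀ᶠ p in 𝓝 ((0 : ℝ), x₀), c p ∈ Metric.ball (ContinuousMap.const _ x₀) ρ :=
    (hc.self_of_nhds.1.continuousAt).eventually_mem (hc₀ ▸ Metric.ball_mem_nhds _ hρ)
  obtain ⟨r, hr, hrc⟩ := Metric.eventually_nhds_iff_ball.1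
    (hc.and (hnear.and (Metric.ball_mem_nhds _ hρ)))
  simp only [← ball_prod_same, Set.mem_prod, Prod.forall] at hrc
  refine ⟨c, r, hr, fun t ht x hx => ?_⟩
  obtain ⟨⟨hcx, hdefect⟩, hcρ, -⟩ := hrc t x ⟨ht, hx⟩
  refine ⟨hcx, hdefect, fun σ => ?_⟩
  have hσt : (σ : ℝ) * t ∈ Metric.ball (0 : ℝ) r := by
    rw [mem_ball_zero_iff] at ht ⊢
    refine lt_of_le_of_lt ?_ ht
    rw [norm_mul, Real.norm_of_nonneg σ.2.1]
    exact mul_le_of_le_one_left (norm_nonneg t) σ.2.2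
  have hmem : ((σ * t, x), rescaleTime σ (c (t, x))) ∈
      Metric.ball (((0 : ℝ), x₀), ContinuousMap.const unitInterval x₀) ρ := by
    refine max_lt (hrc _ x ⟨hσt, hx⟩).2.2 (lt_of_le_of_lt ?_ hcρ)
    exact (ContinuousMap.dist_le dist_nonneg).2 fun τ =>
      ContinuousMap.dist_apply_le_dist (f := c (t, x)) (g := ContinuousMap.const _ x₀) (σ * τ)
  exact (hρu _ hmem (flowDefect_rescaleTime hdefect σ)).symm

theorem exists_contDiffAt_integral_eq {f : E → E} (hf : ContDiff ℝ ∞ f) (x₀ : E) :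
    ∃ φ : ℝ × E → E, ∃ r > 0, ∀ t ∈ Metric.ball (0 : ℝ) r, ∀ x ∈ Metric.ball x₀ r,
      ContDiffAt ℝ ∞ φ (t, x) ∧ φ (t, x) = x + ∫ s in (0 : ℝ)..t, f (φ (s, x)) := by
  obtain ⟨c, r, hr, hc⟩ := exists_contDiffAt_solution_curve (f := ⟨f, hf.continuous⟩) hf x₀
  refine ⟨fun p => c p 1, r, hr, fun t ht x hx => ?_⟩
  obtain ⟨hsmooth, hdefect, hscale⟩ := hc t ht x hx
  refine ⟨(ContinuousMap.evalCLM ℝ (M := E) (1 : unitInterval)).contDiff.contDiffAt.comp _ hsmooth,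
    ?_⟩
  have hcurve : ∀ σ : unitInterval, c (t, x) σ = c (σ * t, x) 1 := fun σ => by
    rw [hscale, rescaleTime_apply, mul_one]
  have hcongr : ∫ s in (0 : ℝ)..1,
        IccExtend zero_le_one (ContinuousMap.comp ⟨f, hf.continuous⟩ (c (t, x))) s =
      ∫ s in (0 : ℝ)..1, f (c (s * t, x) 1) := by
    refine intervalIntegral.integral_congr fun s hs => ?_
    rw [uIcc_of_le zero_le_one] at hs
    simp only [IccExtend_of_mem _ _ hs]
    exact congrArg f (hcurve ⟨s, hs⟩)
  calc c (t, x) 1 = x + t • ∫ s in (0 : ℝ)..1, f (c (s * t, x) 1) := by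
        rw [← hcongr]; exact flowDefect_eq_zero_iff.1 hdefect 1
    _ = x + ∫ s in (0 : ℝ)..t, f (c (s, x) 1) := by
        rw [intervalIntegral.smul_integral_comp_mul_right (fun s => f (c (s, x) 1)), zero_mul,
          one_mul]

theorem exists_contDiffAt_flow {f : E → E} (hf : ContDiff ℝ ∞ f) (x₀ : E) :
    ∃ φ : ℝ × E → E, ∀ᶠ p in 𝓝 ((0 : ℝ), x₀), ContDiffAt ℝ ∞ φ p ∧ φ (0, p.2) = p.2 ∧
      HasDerivAt (fun t => φ (t, p.2)) (f (φ p)) p.1 := by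
  obtain ⟨φ, r, hr, hφ⟩ := exists_contDiffAt_integral_eq hf x₀
  have hr₀ : (0 : ℝ) ∈ Metric.ball (0 : ℝ) r := Metric.mem_ball_self hr
  refine ⟨φ, Metric.eventually_nhds_iff_ball.2 ⟨r, hr, ?_⟩⟩
  rw [← ball_prod_same]
  rintro ⟨t, x⟩ ⟨ht, hx⟩
  refine ⟨(hφ t ht x hx).1, by simpa using (hφ 0 hr₀ x hx).2, ?_⟩
  have hcont : ContinuousOn (fun s => f (φ (s, x))) (Metric.ball 0 r) := fun s hs =>
    (hf.continuous.continuousAt.comp ((hφ s hs x hx).1.continuousAt.comp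
      (f := fun s => (s, x)) (by fun_prop))).continuousWithinAt
  have hsub : uIcc 0 t ⊆ Metric.ball 0 r := (convex_ball (0 : ℝ) r).ordConnected.uIcc_subset hr₀ ht
  have hint : HasDerivAt (fun t => x + ∫ s in (0 : ℝ)..t, f (φ (s, x))) (f (φ (t, x))) t :=
    (intervalIntegral.integral_hasDerivAt_right (hcont.mono hsub).intervalIntegrable
      (hcont.stronglyMeasurableAtFilter Metric.isOpen_ball t ht)
      (hcont.continuousAt (Metric.isOpen_ball.mem_nhds ht))).const_add x
  exact hint.congr_of_eventuallyEq
    (eventually_of_mem (Metric.isOpen_ball.mem_nhds ht) fun s hs => (hφ s hs x hx).2)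

theorem exists_contDiffAt_timeDependent_flow {R : ℝ × E → E} (hR : ContDiff ℝ ∞ R) (x₀ : E) :
    ∃ u : ℝ × E → E, ∀ᶠ p in 𝓝 ((0 : ℝ), x₀), ContDiffAt ℝ ∞ u p ∧ u (0, p.2) = p.2 ∧
      HasDerivAt (fun t => u (t, p.2)) (R (p.1, u p)) p.1 := by
  obtain ⟨φ, hφ⟩ := exists_contDiffAt_flow (f := fun p : ℝ × E => ((1 : ℝ), R p))
    (contDiff_const.prodMk hR) ((0 : ℝ), x₀)
  have hφ₀ : ∀ᶠ p in 𝓝 ((0 : ℝ), x₀), ContDiffAt ℝ ∞ φ (p.1, (0, p.2)) ∧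
      φ (0, (0, p.2)) = (0, p.2) ∧
      HasDerivAt (fun t => φ (t, (0, p.2))) (1, R (φ (p.1, (0, p.2)))) p.1 :=
    (Continuous.tendsto' (f := fun p : ℝ × E => (p.1, ((0 : ℝ), p.2))) (by fun_prop)
      (0, x₀) (0, (0, x₀)) rfl).eventually hφ
  obtain ⟨r, hr, hφr⟩ := Metric.eventually_nhds_iff_ball.1 hφ₀
  simp only [← ball_prod_same, Set.mem_prod, Prod.forall] at hφr
  refine ⟨fun p => (φ (p.1, (0, p.2))).2, Metric.eventually_nhds_iff_ball.2 ⟨r, hr, ?_⟩⟩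
  rw [← ball_prod_same]
  rintro ⟨t, x⟩ ⟨ht, hx⟩
  obtain ⟨hsmooth, hinit, hderiv⟩ := hφr t x ⟨ht, hx⟩
  have htime : (φ (t, (0, x))).1 = t := by
    have hderiv₁ : ∀ s ∈ Metric.ball (0 : ℝ) r, HasDerivAt (fun s => (φ (s, (0, x))).1) 1 s :=
      fun s hs => (hφr s x ⟨hs, hx⟩).2.2.fst
    exact Metric.isOpen_ball.eqOn_of_deriv_eq (g := fun s => s)
      (convex_ball (0 : ℝ) r).isPreconnected
      (fun s hs => (hderiv₁ s hs).differentiableAt.differentiableWithinAt) differentiableOn_id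
      (fun s hs => (hderiv₁ s hs).deriv.trans (hasDerivAt_id s).deriv.symm)
      (Metric.mem_ball_self hr) (by simp [hinit]) ht
  have hpair : φ (t, (0, x)) = (t, (φ (t, (0, x))).2) := Prod.ext htime rfl
  refine ⟨contDiffAt_snd.comp _ (hsmooth.comp (t, x) (f := fun p : ℝ × E => (p.1, ((0 : ℝ), p.2)))
    (by fun_prop)), by simp [hinit], ?_⟩
  exact hpair ▸ hderiv.snd

end SmoothFlow

theorem exists_ball_ode_solution_unique {E : Type*} [NormedAddCommGroup E] [NormedSpace ℝ E]
    {R : ℝ × E → E} {x₀ : E} (hR : ContDiffAt ℝ 1 R (0, x₀)) :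
    ∃ r > 0, ∀ ε ∈ Set.Ioc 0 r, ∀ u v : ℝ → E,
      (∀ t ∈ Set.Ioo (-ε) ε, HasDerivAt u (R (t, u t)) t ∧ u t ∈ Metric.ball x₀ r) →
      (∀ t ∈ Set.Ioo (-ε) ε, HasDerivAt v (R (t, v t)) t ∧ v t ∈ Metric.ball x₀ r) →
      u 0 = v 0 → Set.EqOn u v (Set.Ioo (-ε) ε) := by
  obtain ⟨K, s, hs, hK⟩ := hR.exists_lipschitzOnWith
  obtain ⟨r, hr, hrs⟩ := Metric.mem_nhds_iff.1 hs
  refine ⟨r, hr, fun ε hε u v hu hv huv => ?_⟩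
  refine ODE_solution_unique_of_mem_Ioo (v := fun t y => R (t, y)) (s := fun _ => Metric.ball x₀ r)
    (K := K) (fun t ht => ?_) ⟨neg_lt_zero.2 hε.1, hε.1⟩ hu hv huv
  have htr : t ∈ Metric.ball (0 : ℝ) r := by
    rw [mem_ball_zero_iff, Real.norm_eq_abs, abs_lt]
    exact ⟨(neg_le_neg hε.2).trans_lt ht.1, ht.2.trans_le hε.2⟩
  have hmaps : Set.MapsTo (fun y => (t, y)) (Metric.ball x₀ r) s := fun y hy =>
    hrs (ball_prod_same (0 : ℝ) x₀ r ▸ Set.mk_mem_prod htr hy)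
  simpa [Function.comp_def] using hK.comp (LipschitzWith.prodMk_left t).lipschitzOnWith hmaps

theorem exists_openPartialHomeomorph_contDiffOn_symm {E F : Type*}
    [NormedAddCommGroup E] [NormedSpace ℝ E] [CompleteSpace E]
    [NormedAddCommGroup F] [NormedSpace ℝ F] {f : E → F} {s : Set E} (hs : IsOpen s)
    (hf : ContDiffOn ℝ ∞ f s) {x : E} (hx : x ∈ s) (hinv : (fderiv ℝ f x).IsInvertible) :
    ∃ e : OpenPartialHomeomorph E F, ⇑e = f ∧ x ∈ e.source ∧ e.source ⊆ s ∧
      ContDiffOn ℝ ∞ e.symm e.target := by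
  have hdiff : ∀ y ∈ s, HasFDerivAt f (fderiv ℝ f y) y := fun y hy =>
    ((hf.contDiffAt (hs.mem_nhds hy)).differentiableAt (by simp)).hasFDerivAt
  have hopen : IsOpen (s ∩ fderiv ℝ f ⁻¹' Set.range ContinuousLinearEquiv.toContinuousLinearMap) :=
    (hf.continuousOn_fderiv_of_isOpen hs (by simp)).isOpen_inter_preimage hs
      ContinuousLinearEquiv.isOpen
  have hfx : ContDiffAt ℝ ∞ f x := hf.contDiffAt (hs.mem_nhds hx)
  obtain ⟨f', hf'⟩ := id hinv
  have hfx' : HasFDerivAt f (f' : E →L[ℝ] F) x := hf' ▸ hdiff x hx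
  set e := (hfx.toOpenPartialHomeomorph f hfx' (by simp)).restrOpen _ hopen
  refine ⟨e, rfl, ⟨hfx.mem_toOpenPartialHomeomorph_source hfx' (by simp), hx, hinv⟩,
    fun y hy => hy.2.1, fun y hy => ?_⟩
  obtain ⟨-, hys, g, hg⟩ := e.map_target hy
  exact (e.contDiffAt_symm (f₀' := g) hy (hg ▸ hdiff _ hys)
    (hf.contDiffAt (hs.mem_nhds hys))).contDiffWithinAt

namespace OrbEquiv

variable {E : Type*} [NormedAddCommGroup E] [NormedSpace ℝ E] {V N V' : E → E} {x₀ y₀ z₀ : E}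
  {Dom Dom' : Set E}

theorem of_eventually [CompleteSpace E] {χ : E → E} {h : E → ℝ} (hDom : Dom ∈ 𝓝 x₀)
    (hχ : ∀ᶠ x in 𝓝 x₀, ContDiffAt ℝ ∞ χ x) (hinv : (fderiv ℝ χ x₀).IsInvertible)
    (hh : ∀ᶠ x in 𝓝 x₀, ContDiffAt ℝ ∞ h x) (hh₀ : h x₀ ≠ 0)
    (hVN : ∀ᶠ x in 𝓝 x₀, fderiv ℝ χ x (V x) = h x • N (χ x)) :
    OrbEquiv Dom V N x₀ (χ x₀) := by
  have hh₁ : ∀ᶠ x in 𝓝 x₀, h x ≠ 0 := hh.self_of_nhds.continuousAt.eventually_ne hh₀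
  obtain ⟨s, hs, hso, hxs⟩ := mem_nhds_iff.1
    (hχ.and (hh.and (hh₁.and (hVN.and hDom))))
  obtain ⟨e, rfl, hxe, hes, hsymm⟩ := exists_openPartialHomeomorph_contDiffOn_symm hso
    (fun x hx => (hs hx).1.contDiffWithinAt) hxs hinv
  exact ⟨e.source, e.target, e, e.symm, h, e.open_source, e.open_target, hxe, e.map_source hxe,
    fun x hx => (hs (hes hx)).2.2.2.2, fun x hx => (hs (hes hx)).1.contDiffWithinAt, hsymm, rfl,
    e.mapsTo, e.mapsTo_symm, fun _ => e.left_inv, fun _ => e.right_inv,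
    fun x hx => (hs (hes hx)).2.1.contDiffWithinAt, fun x hx => (hs (hes hx)).2.2.1,
    fun x hx => (hs (hes hx)).2.2.2.1⟩

theorem symm (hVN : OrbEquiv Dom V N x₀ y₀) : OrbEquiv Set.univ N V y₀ x₀ := by
  obtain ⟨U, U', Φ, Ψ, h, hU, hU', hx, hy, -, hΦ, hΨ, hxy, hΦU, hΨU, hΨΦ, hΦΨ, hh, hh₀, hVN⟩ := hVN
  refine ⟨U', U, Ψ, Φ, fun y => (h (Ψ y))⁻¹, hU', hU, hy, hx, Set.subset_univ _, hΨ, hΦ,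
    hxy ▸ hΨΦ x₀ hx, hΨU, hΦU, hΦΨ, hΨΦ, (hh.comp hΨ hΨU).inv fun y hy => hh₀ _ (hΨU hy),
    fun y hy => inv_ne_zero (hh₀ _ (hΨU hy)), fun y hy => ?_⟩
  have hΨy : Ψ y ∈ U := hΨU hy
  have hid : fderiv ℝ Ψ y ∘L fderiv ℝ Φ (Ψ y) = ContinuousLinearMap.id ℝ E := by
    have hΨ' : DifferentiableAt ℝ Ψ (Φ (Ψ y)) :=
      (hΨ.contDiffAt (hU'.mem_nhds (hΦU hΨy))).differentiableAt (by simp)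
    have hΦ' : DifferentiableAt ℝ Φ (Ψ y) :=
      (hΦ.contDiffAt (hU.mem_nhds hΨy)).differentiableAt (by simp)
    have hcomp : Ψ ∘ Φ =ᶠ[𝓝 (Ψ y)] id := eventually_of_mem (hU.mem_nhds hΨy) hΨΦ
    simpa [fderiv_comp _ hΨ' hΦ', hΦΨ y hy] using hcomp.fderiv_eq (𝕜 := ℝ)
  have hpush : V (Ψ y) = h (Ψ y) • fderiv ℝ Ψ y (N y) := by
    have hΦV := hVN _ hΨy
    rw [hΦΨ y hy] at hΦV
    rw [← map_smul, ← hΦV]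
    exact (DFunLike.congr_fun hid (V (Ψ y))).symm
  rw [hpush, smul_smul, inv_mul_cancel₀ (hh₀ _ hΨy), one_smul]

theorem trans (hVN : OrbEquiv Dom V N x₀ y₀) (hNV' : OrbEquiv Dom' N V' y₀ z₀) :
    OrbEquiv Dom V V' x₀ z₀ := by
  obtain ⟨U₁, U₁', Φ₁, Ψ₁, h₁, hU₁, hU₁', hx, hy, hDom, hΦ₁, hΨ₁, hxy, hΦU₁, hΨU₁, hΨΦ₁, hΦΨ₁, hh₁,
    hh₁₀, hVN₁⟩ := hVN
  obtain ⟨U₂, U₂', Φ₂, Ψ₂, h₂, hU₂, hU₂', hy₂, hz, -, hΦ₂, hΨ₂, hyz, hΦU₂, hΨU₂, hΨΦ₂, hΦΨ₂, hh₂,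
    hh₂₀, hVN₂⟩ := hNV'
  refine ⟨U₁ ∩ Φ₁ ⁻¹' U₂, U₂' ∩ Ψ₂ ⁻¹' U₁', Φ₂ ∘ Φ₁, Ψ₁ ∘ Ψ₂, fun x => h₁ x * h₂ (Φ₁ x),
    hΦ₁.continuousOn.isOpen_inter_preimage hU₁ hU₂,
    hΨ₂.continuousOn.isOpen_inter_preimage hU₂' hU₁', ⟨hx, by rwa [Set.mem_preimage, hxy]⟩,
    ⟨hz, ?_⟩, fun x hx => hDom hx.1,
    hΦ₂.comp (hΦ₁.mono Set.inter_subset_left) Set.inter_subset_right,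
    hΨ₁.comp (hΨ₂.mono Set.inter_subset_left) Set.inter_subset_right, ?_,
    fun x hx => ⟨hΦU₂ hx.2, ?_⟩, fun z hz => ⟨hΨU₁ hz.2, ?_⟩, fun x hx => ?_, fun z hz => ?_,
    (hh₁.mono Set.inter_subset_left).mul
      (hh₂.comp (hΦ₁.mono Set.inter_subset_left) Set.inter_subset_right),
    fun x hx => mul_ne_zero (hh₁₀ x hx.1) (hh₂₀ _ hx.2), fun x hx => ?_⟩
  · rwa [Set.mem_preimage, ← hyz, hΨΦ₂ _ hy₂]
  · rw [Function.comp_apply, hxy, hyz]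
  · rw [Set.mem_preimage, Function.comp_apply, hΨΦ₂ _ hx.2]
    exact hΦU₁ hx.1
  · rw [Set.mem_preimage, Function.comp_apply, hΦΨ₁ _ hz.2]
    exact hΨU₂ hz.1
  · rw [Function.comp_apply, Function.comp_apply, hΨΦ₂ _ hx.2, hΨΦ₁ _ hx.1]
  · rw [Function.comp_apply, Function.comp_apply, hΦΨ₁ _ hz.2, hΦΨ₂ _ hz.1]
  · have hΦ₁' := (hΦ₁.contDiffAt (hU₁.mem_nhds hx.1)).differentiableAt (by simp)
    have hΦ₂' := (hΦ₂.contDiffAt (hU₂.mem_nhds hx.2)).differentiableAt (by simp)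
    rw [fderiv_comp x hΦ₂' hΦ₁', ContinuousLinearMap.comp_apply, hVN₁ x hx.1, map_smul,
      hVN₂ _ hx.2, smul_smul, Function.comp_apply]

end OrbEquiv

section Dilations

universe u

variable {E : Type u} [NormedAddCommGroup E] [NormedSpace ℝ E]
  {δ : ℝ →* (E →L[ℝ] E)} {P : E → E} {R : ℝ × E → E}

theorem dilation_isInvertible (δ : ℝ →* (E →L[ℝ] E)) {τ : ℝ} (hτ : τ ≠ 0) :
    (δ τ).IsInvertible := by
  refine .of_inverse (g := δ τ⁻¹) ?_ ?_ <;>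
  · rw [← ContinuousLinearMap.mul_def, ← map_mul]
    simp [hτ, ContinuousLinearMap.one_def]

theorem rescaled_apply_dilation (hR : Continuous R)
    (hP : ∀ τ x, P (δ τ x) = τ • δ τ (R (τ, x))) (τ σ : ℝ) (x : E) :
    R (τ, δ σ x) = σ • δ σ (R (σ * τ, x)) := by
  refine congrFun (Continuous.ext_on (f := fun τ => R (τ, δ σ x))
    (g := fun τ => σ • δ σ (R (σ * τ, x))) (dense_compl_singleton 0) (by fun_prop) (by fun_prop)
    fun τ hτ => ?_) τ
  refine (dilation_isInvertible δ hτ).injective (smul_right_injective E hτ ?_)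
  calc τ • δ τ (R (τ, δ σ x)) = P (δ (σ * τ) x) := by
        rw [← hP, mul_comm, map_mul, mul_apply_eq_comp]
    _ = τ • δ τ (σ • δ σ (R (σ * τ, x))) := by
        rw [hP, mul_comm σ, map_mul, mul_apply_eq_comp, map_smul, mul_smul]

/-- The generator `A = dδ_τ/dτ` at `τ = 1` of a family of dilations with `δ_{στ} = δ_σ δ_τ`. The
family is a homomorphism on the multiplicative monoid `ℝ`, so it includes the degenerate `δ_0`. -/
noncomputable def dilationGenerator (δ : ℝ →* (E →L[ℝ] E)) : E →L[ℝ] E := deriv δ 1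

theorem hasDerivAt_dilation_apply (hδ : Differentiable ℝ δ) (x : E) :
    HasDerivAt (fun σ => δ σ x) (dilationGenerator δ x) 1 := by
  simpa [dilationGenerator] using (hδ 1).hasDerivAt.clm_apply (hasDerivAt_const (1 : ℝ) x)

theorem dilationGenerator_apply_dilation (hδ : Differentiable ℝ δ) (τ : ℝ) (x : E) :
    dilationGenerator δ (δ τ x) = δ τ (dilationGenerator δ x) := by
  have hcomm : (fun σ => δ σ (δ τ x)) = fun σ => δ τ (δ σ x) := by
    funext σ
    rw [← mul_apply_eq_comp, ← mul_apply_eq_comp, ← map_mul, ← map_mul, mul_comm]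
  refine (hasDerivAt_dilation_apply hδ (δ τ x)).unique ?_
  rw [hcomm]
  exact (δ τ).hasFDerivAt.comp_hasDerivAt 1 (hasDerivAt_dilation_apply hδ x)

theorem hasDerivAt_dilation_comp_mul (hR : Continuous R)
    (hP : ∀ τ x, P (δ τ x) = τ • δ τ (R (τ, x))) {y : ℝ → E} {σ s : ℝ}
    (hy : HasDerivAt y (R (σ * s, y (σ * s))) (σ * s)) :
    HasDerivAt (fun s => δ σ (y (σ * s))) (R (s, δ σ (y (σ * s)))) s := by
  rw [rescaled_apply_dilation hR hP, ← map_smul]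
  exact (δ σ).hasFDerivAt.comp_hasDerivAt s
    (hy.scomp (h := fun s => σ * s) s (by simpa using (hasDerivAt_id s).const_mul σ))

theorem eventually_flow_dilation_comm (hδ : Continuous δ) (hR : ContDiff ℝ 1 R)
    (hP : ∀ τ x, P (δ τ x) = τ • δ τ (R (τ, x))) {u : ℝ × E → E}
    (hu : ∀ᶠ p in 𝓝 ((0 : ℝ), (0 : E)), ContinuousAt u p ∧ u (0, p.2) = p.2 ∧
      HasDerivAt (fun t => u (t, p.2)) (R (p.1, u p)) p.1) :
    ∀ᶠ p in 𝓝 ((0 : ℝ), (0 : E)), ∀ σ ∈ Set.Icc (0 : ℝ) 2,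
      u (p.1, δ σ p.2) = δ σ (u (σ * p.1, p.2)) := by
  obtain ⟨r, hr, hunique⟩ := exists_ball_ode_solution_unique (x₀ := (0 : E)) hR.contDiffAt
  obtain ⟨C, hC⟩ := isCompact_Icc.exists_bound_of_continuousOn (s := Set.Icc (0 : ℝ) 2)
    (continuous_id.prodMk hδ).continuousOn
  set K := max C 1
  have hK₁ : 1 ≤ K := le_max_right _ _
  have hK : 0 < K := one_pos.trans_le hK₁
  have hu₀ : u (0, 0) = 0 := hu.self_of_nhds.2.1
  have hsmall : ∀ᶠ p in 𝓝 ((0 : ℝ), (0 : E)), ‖u p‖ < r / K :=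
    hu.self_of_nhds.1.norm.eventually_lt_const (by simpa [hu₀] using div_pos hr hK)
  obtain ⟨ρ, hρ, huρ⟩ := Metric.eventually_nhds_iff_ball.1 (hu.and hsmall)
  simp only [← ball_prod_same, Set.mem_prod, Prod.forall, mem_ball_zero_iff] at huρ
  set η := min r (ρ / K)
  have hη : 0 < η := lt_min hr (div_pos hρ hK)
  refine Metric.eventually_nhds_iff_ball.2 ⟨η, hη, ?_⟩
  rw [← ball_prod_same]
  rintro ⟨t, x⟩ ⟨ht, hx⟩ σ hσ
  rw [mem_ball_zero_iff] at ht hx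
  have hscale : ∀ {c y : ℝ}, 0 ≤ y → c ≤ K → y < η → c * y < ρ := fun {c y} hy hc hyη =>
    calc c * y ≤ K * y := by gcongr
      _ < K * (ρ / K) := by gcongr; exact hyη.trans_le (min_le_right _ _)
      _ = ρ := mul_div_cancel₀ ρ hK.ne'
  obtain ⟨hσK, hδσ⟩ : ‖σ‖ ≤ K ∧ ‖δ σ‖ ≤ K :=
    norm_prod_le_iff.1 ((hC σ hσ).trans (le_max_left _ _))
  have hδx : ‖δ σ x‖ < ρ := ((δ σ).le_opNorm x).trans_lt (hscale (norm_nonneg x) hδσ hx)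
  have hxρ : ‖x‖ < ρ := by simpa using hscale (norm_nonneg x) hK₁ hx
  refine hunique η ⟨hη, min_le_left _ _⟩ (fun s => u (s, δ σ x)) (fun s => δ σ (u (σ * s, x)))
    (fun s hs => ?_) (fun s hs => ?_) ?_ (abs_lt.1 ht)
  · have hsρ : ‖s‖ < ρ := by simpa using hscale (norm_nonneg s) hK₁ (abs_lt.2 hs)
    obtain ⟨⟨-, -, hderiv⟩, hnorm⟩ := huρ s _ ⟨hsρ, hδx⟩
    exact ⟨hderiv, mem_ball_zero_iff.2 (hnorm.trans_le (div_le_self hr.le hK₁))⟩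
  · have hsρ : ‖σ * s‖ < ρ := by
      rw [norm_mul]; exact hscale (norm_nonneg s) hσK (abs_lt.2 hs)
    obtain ⟨⟨-, -, hderiv⟩, hnorm⟩ := huρ (σ * s) x ⟨hsρ, hxρ⟩
    refine ⟨hasDerivAt_dilation_comp_mul hR.continuous hP (y := fun s => u (s, x)) hderiv,
      mem_ball_zero_iff.2 ?_⟩
    calc ‖δ σ (u (σ * s, x))‖ ≤ K * ‖u (σ * s, x)‖ := (δ σ).le_of_opNorm_le hδσ _
      _ < K * (r / K) := by gcongr
      _ = r := mul_div_cancel₀ r hK.ne'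
  · have hzero : ‖(0 : ℝ)‖ < ρ := by simpa using hρ
    simp only [mul_zero]
    rw [(huρ 0 _ ⟨hzero, hδx⟩).1.2.1, (huρ 0 x ⟨hzero, hxρ⟩).1.2.1]

variable {u : ℝ × E → E}

theorem fderiv_flow_apply_dilationGenerator (hδ : Differentiable ℝ δ) {ε : ℝ} {x : E}
    (hu : DifferentiableAt ℝ u (ε, x))
    (hderiv : HasDerivAt (fun t => u (t, x)) (R (ε, u (ε, x))) ε)
    (hcomm : ∀ᶠ σ in 𝓝 1, u (ε, δ σ x) = δ σ (u (σ * ε, x))) :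
    fderiv ℝ u (ε, x) (0, dilationGenerator δ x) =
      dilationGenerator δ (u (ε, x)) + ε • R (ε, u (ε, x)) := by
  have hleft : HasDerivAt (fun σ => u (ε, δ σ x))
      (fderiv ℝ u (ε, x) (0, dilationGenerator δ x)) 1 := by
    refine HasFDerivAt.comp_hasDerivAt_of_eq (y := (ε, x)) 1 hu.hasFDerivAt
      ((hasDerivAt_const _ ε).prodMk (hasDerivAt_dilation_apply hδ x)) (by simp)
  have htime : HasDerivAt (fun σ => u (σ * ε, x)) (ε • R (ε, u (ε, x))) 1 :=
    HasDerivAt.scomp_of_eq (g₁ := fun t => u (t, x)) 1 hderiv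
      (by simpa using (hasDerivAt_id (1 : ℝ)).mul_const ε) (one_mul ε).symm
  have hright : HasDerivAt (fun σ => δ σ (u (σ * ε, x)))
      (dilationGenerator δ (u (ε, x)) + ε • R (ε, u (ε, x))) 1 := by
    simpa [dilationGenerator] using (hδ 1).hasDerivAt.clm_apply htime
  exact hleft.unique (hright.congr_of_eventuallyEq hcomm)

variable [CompleteSpace E]

theorem eventually_isInvertible_fderiv_comp_inr {x₀ : E}
    (hu : ∀ᶠ p in 𝓝 ((0 : ℝ), x₀), ContDiffAt ℝ ∞ u p ∧ u (0, p.2) = p.2) :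
    ∀ᶠ p in 𝓝 ((0 : ℝ), x₀), (fderiv ℝ u p ∘L .inr ℝ ℝ E).IsInvertible := by
  have hsmooth : ContDiffAt ℝ ∞ u (0, x₀) := hu.self_of_nhds.1
  have hcont : ContinuousAt (fun p => fderiv ℝ u p ∘L .inr ℝ ℝ E) (0, x₀) :=
    (hsmooth.fderiv_right (m := 0) (by simp)).continuousAt.clm_comp continuousAt_const
  have hinit : (fun x => u (0, x)) =ᶠ[𝓝 x₀] id := hu.curry_nhds.self_of_nhds.mono fun _ h => h.2
  have hid : fderiv ℝ u (0, x₀) ∘L .inr ℝ ℝ E = ContinuousLinearMap.id ℝ E :=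
    ((hsmooth.differentiableAt (by simp)).hasFDerivAt.comp x₀
      (hasFDerivAt_prodMk_right 0 x₀)).unique
      ((hasFDerivAt_id x₀).congr_of_eventuallyEq hinit)
  exact hcont.eventually (ContinuousLinearEquiv.isOpen.mem_nhds ⟨.refl ℝ E, hid.symm⟩)

theorem orbEquiv_dilationGenerator_add (hδ : ContDiff ℝ ∞ δ) (hR : ContDiff ℝ ∞ R)
    (hP : ∀ τ x, P (δ τ x) = τ • δ τ (R (τ, x))) :
    OrbEquiv Set.univ (fun x => dilationGenerator δ x + P x) (fun x => dilationGenerator δ x)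
      0 0 := by
  have hδ' : Differentiable ℝ δ := hδ.differentiable (by simp)
  obtain ⟨u, hu⟩ := exists_contDiffAt_timeDependent_flow hR 0
  have hcomm := eventually_flow_dilation_comm hδ.continuous (hR.of_le (by simp)) hP
    (hu.mono fun p hp => ⟨hp.1.continuousAt, hp.2⟩)
  have hinv := eventually_isInvertible_fderiv_comp_inr (hu.mono fun p hp => ⟨hp.1, hp.2.1⟩)
  obtain ⟨ε, hgood, hε⟩ := (((hu.and (hcomm.and hinv)).curry_nhds.filter_mono
    nhdsWithin_le_nhds).and (self_mem_nhdsWithin (s := {0}ᶜ))).exists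
  have hΨ : ∀ᶠ x in 𝓝 (0 : E), HasFDerivAt (fun x => δ ε (u (ε, x)))
      (δ ε ∘L fderiv ℝ u (ε, x) ∘L .inr ℝ ℝ E) x := hgood.mono fun x hx =>
    (δ ε).hasFDerivAt.comp x ((hx.1.1.differentiableAt (by simp)).hasFDerivAt.comp x
      (hasFDerivAt_prodMk_right ε x))
  have hΨ₀ : δ ε (u (ε, 0)) = 0 := by
    obtain ⟨⟨-, hinit, -⟩, hcomm₀, -⟩ := hgood.self_of_nhds
    have huε : u (ε, 0) = 0 := by simpa [hinit] using hcomm₀ 0 (by simp)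
    rw [huε, map_zero]
  refine OrbEquiv.symm (Dom := Set.univ) ?_
  nth_rw 2 [← hΨ₀]
  refine OrbEquiv.of_eventually (χ := fun x => δ ε (u (ε, x))) (h := fun _ => 1) univ_mem
    (hgood.mono fun x hx => (δ ε).contDiff.contDiffAt.comp x
      (hx.1.1.comp x (contDiffAt_const.prodMk contDiffAt_id))) ?_ (by simp [contDiffAt_const])
    one_ne_zero ?_
  · rw [hΨ.self_of_nhds.fderiv]
    exact (dilation_isInvertible δ hε).comp hgood.self_of_nhds.2.2
  · filter_upwards [hgood, hΨ] with x ⟨⟨hsmooth, _, hderiv⟩, hcomm, _⟩ hΨx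
    have hcomm' : ∀ᶠ σ in 𝓝 (1 : ℝ), u (ε, δ σ x) = δ σ (u (σ * ε, x)) :=
      eventually_of_mem (Icc_mem_nhds one_pos one_lt_two) hcomm
    rw [hΨx.fderiv, one_smul, hP, dilationGenerator_apply_dilation hδ', ← map_smul, ← map_add,
      ← fderiv_flow_apply_dilationGenerator hδ' (hsmooth.differentiableAt (by simp)) hderiv hcomm']
    rfl

end Dilations

section Node

/-- The dilations `(ξ, η, ζ) ↦ (τ² ξ, τ η, ζ)`, whose generator is the linear part of a `2 : 1`
node with a line of singular points. -/
noncomputable def nodeDilation : ℝ →* (ℝ × ℝ × ℝ →L[ℝ] ℝ × ℝ × ℝ) where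
  toFun τ := (τ ^ 2 • ContinuousLinearMap.id ℝ ℝ).prodMap
    ((τ • ContinuousLinearMap.id ℝ ℝ).prodMap (.id ℝ ℝ))
  map_one' := by ext <;> simp
  map_mul' σ τ := by ext <;> simp [mul_pow]

theorem nodeDilation_apply (τ : ℝ) (x : ℝ × ℝ × ℝ) :
    nodeDilation τ x = (τ ^ 2 * x.1, τ * x.2.1, x.2.2) := rfl

theorem contDiff_nodeDilation : ContDiff ℝ ∞ nodeDilation :=
  contDiff_clm_apply_iff.2 fun x => by simp only [nodeDilation_apply]; fun_prop

theorem dilationGenerator_nodeDilation_apply (x : ℝ × ℝ × ℝ) :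
    dilationGenerator nodeDilation x = (2 * x.1, x.2.1, 0) := by
  refine (hasDerivAt_dilation_apply (contDiff_nodeDilation.differentiable (by simp)) x).unique ?_
  simp only [nodeDilation_apply]
  have hsq : HasDerivAt (fun σ : ℝ => σ ^ 2 * x.1) (2 * x.1) 1 := by
    simpa using (hasDerivAt_pow 2 (1 : ℝ)).mul_const x.1
  have hlin : HasDerivAt (fun σ : ℝ => σ * x.2.1) x.2.1 1 := by
    simpa using (hasDerivAt_id (1 : ℝ)).mul_const x.2.1
  exact hsq.prodMk (hlin.prodMk (hasDerivAt_const 1 x.2.2))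

theorem orbEquiv_node_of_contDiff {α β γ : ℝ × ℝ × ℝ → ℝ} (hα : ContDiff ℝ ∞ α)
    (hβ : ContDiff ℝ ∞ β) (hγ : ContDiff ℝ ∞ γ) :
    OrbEquiv Set.univ
      (fun y => (2 * y.1, y.2.1 + y.2.1 ^ 2 * β y + y.1 * α y, y.1 * γ y))
      (fun y => (2 * y.1, y.2.1, 0)) 0 0 := by
  have hδ : ContDiff ℝ ∞ fun p : ℝ × ℝ × ℝ × ℝ => nodeDilation p.1 p.2 :=
    (contDiff_nodeDilation.comp contDiff_fst).clm_apply contDiff_snd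
  have hconj := orbEquiv_dilationGenerator_add (δ := nodeDilation)
    (P := fun y => (0, y.2.1 ^ 2 * β y + y.1 * α y, y.1 * γ y))
    (R := fun p => (0, p.2.2.1 ^ 2 * β (nodeDilation p.1 p.2) + p.2.1 * α (nodeDilation p.1 p.2),
      p.1 * (p.2.1 * γ (nodeDilation p.1 p.2))))
    contDiff_nodeDilation (by fun_prop) fun τ x => by
      simp only [nodeDilation_apply]
      ext <;> simp <;> ring
  simpa [dilationGenerator_nodeDilation_apply, add_assoc] using hconj

theorem exists_contDiff_eventuallyEq {E F : Type*} [NormedAddCommGroup E] [NormedSpace ℝ E]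
    [HasContDiffBump E] [NormedAddCommGroup F] [NormedSpace ℝ F] {g : E → F} {x₀ : E}
    (hg : ∀ᶠ x in 𝓝 x₀, ContDiffAt ℝ ∞ g x) :
    ∃ G : E → F, ContDiff ℝ ∞ G ∧ G =ᶠ[𝓝 x₀] g := by
  obtain ⟨r, hr, hgr⟩ := Metric.nhds_basis_closedBall.mem_iff.1 hg
  let φ : ContDiffBump x₀ := ⟨r / 2, r, half_pos hr, half_lt_self hr⟩
  refine ⟨fun x => φ x • g x, contDiff_iff_contDiffAt.2 fun x => ?_, ?_⟩
  · by_cases hx : x ∈ tsupport φ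
    · exact φ.contDiffAt.smul (hgr (by rwa [φ.tsupport_eq] at hx))
    · refine contDiffAt_const (c := (0 : F)) |>.congr_of_eventuallyEq ?_
      filter_upwards [notMem_tsupport_iff_eventuallyEq.1 hx] with y hy
      rw [hy, Pi.zero_apply, zero_smul]
  · filter_upwards [φ.eventuallyEq_one] with y hy
    rw [hy, Pi.one_apply, one_smul]

theorem exists_contDiff_comp_eventuallyEq {E F G : Type*}
    [NormedAddCommGroup E] [NormedSpace ℝ E] [CompleteSpace E]
    [NormedAddCommGroup F] [NormedSpace ℝ F] [HasContDiffBump F]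
    [NormedAddCommGroup G] [NormedSpace ℝ G] {χ : E → F} {g : E → G} {x₀ : E}
    (hχ : ∀ᶠ x in 𝓝 x₀, ContDiffAt ℝ ∞ χ x) (hinv : (fderiv ℝ χ x₀).IsInvertible)
    (hg : ∀ᶠ x in 𝓝 x₀, ContDiffAt ℝ ∞ g x) :
    ∃ g' : F → G, ContDiff ℝ ∞ g' ∧ g' ∘ χ =ᶠ[𝓝 x₀] g := by
  obtain ⟨s, hs, hso, hxs⟩ := mem_nhds_iff.1 (hχ.and hg)
  obtain ⟨e, rfl, hxe, hes, hsymm⟩ := exists_openPartialHomeomorph_contDiffOn_symm hso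
    (fun x hx => (hs hx).1.contDiffWithinAt) hxs hinv
  have hsmooth : ∀ᶠ y in 𝓝 (e x₀), ContDiffAt ℝ ∞ (g ∘ e.symm) y := by
    filter_upwards [e.open_target.mem_nhds (e.map_source hxe)] with y hy
    exact (hs (hes (e.map_target hy))).2.comp y (hsymm.contDiffAt (e.open_target.mem_nhds hy))
  obtain ⟨g', hg', heq⟩ := exists_contDiff_eventuallyEq hsmooth
  refine ⟨g', hg', ?_⟩
  filter_upwards [(e.continuousAt hxe).eventually heq, e.open_source.mem_nhds hxe] with x hx hxe
  rw [Function.comp_apply, hx, Function.comp_apply, e.left_inv hxe]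

theorem orbEquiv_node_of_chart {Dom : Set (ℝ × ℝ × ℝ)} {V χ : ℝ × ℝ × ℝ → ℝ × ℝ × ℝ}
    {α β γ h : ℝ × ℝ × ℝ → ℝ} {x₀ : ℝ × ℝ × ℝ} (hDom : Dom ∈ 𝓝 x₀)
    (hχ : ∀ᶠ x in 𝓝 x₀, ContDiffAt ℝ ∞ χ x) (hχ₀ : χ x₀ = 0)
    (hinv : (fderiv ℝ χ x₀).IsInvertible) (hα : ∀ᶠ x in 𝓝 x₀, ContDiffAt ℝ ∞ α x)
    (hβ : ∀ᶠ x in 𝓝 x₀, ContDiffAt ℝ ∞ β x) (hγ : ∀ᶠ x in 𝓝 x₀, ContDiffAt ℝ ∞ γ x)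
    (hh : ∀ᶠ x in 𝓝 x₀, ContDiffAt ℝ ∞ h x) (hh₀ : h x₀ ≠ 0)
    (hV : ∀ᶠ x in 𝓝 x₀, fderiv ℝ χ x (V x) = h x • (2 * (χ x).1,
      (χ x).2.1 + (χ x).2.1 ^ 2 * β x + (χ x).1 * α x, (χ x).1 * γ x)) :
    OrbEquiv Dom V (fun y => (2 * y.1, y.2.1, 0)) x₀ 0 := by
  obtain ⟨α', hα', hαχ⟩ := exists_contDiff_comp_eventuallyEq hχ hinv hα
  obtain ⟨β', hβ', hβχ⟩ := exists_contDiff_comp_eventuallyEq hχ hinv hβ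
  obtain ⟨γ', hγ', hγχ⟩ := exists_contDiff_comp_eventuallyEq hχ hinv hγ
  refine OrbEquiv.trans ?_ (orbEquiv_node_of_contDiff hα' hβ' hγ')
  rw [← hχ₀]
  refine .of_eventually hDom hχ hinv hh hh₀ ?_
  filter_upwards [hV, hαχ, hβχ, hγχ] with x hVx hαx hβx hγx
  rw [hVx, ← hαx, ← hβx, ← hγx]
  rfl

end Node

section Metric

/-- The discriminant `Δ = b² - ac` of the quadratic form `a p² + 2 b p + c`; it vanishes at the
parabolic points of the metric. -/
def discriminant (a b c : ℝ × ℝ → ℝ) (q : ℝ × ℝ) : ℝ := b q ^ 2 - a q * c q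

/-- The derivative `g_t + p g_x` of `g` at `q` along the direction of slope `p = dx/dt`. -/
noncomputable def slopeDeriv (g : ℝ × ℝ → ℝ) (q : ℝ × ℝ) (p : ℝ) : ℝ := fderiv ℝ g q (1, p)

/-- The cubic polynomial `M(q, p) = μ₃ p³ + μ₂ p² + μ₁ p + μ₀` in the slope `p` from the equation
of geodesics `2Δ dp/dt = M`. -/
noncomputable def geodesicCubic (a b c : ℝ × ℝ → ℝ) (q : ℝ × ℝ) (p : ℝ) : ℝ :=
  (a q * (d1 a q - 2 * d2 b q) + b q * d2 a q) * p ^ 3 +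
    (b q * (3 * d1 a q - 2 * d2 b q) + c q * d2 a q - 2 * a q * d2 c q) * p ^ 2 +
    (b q * (2 * d1 b q - 3 * d2 c q) + 2 * c q * d1 a q - a q * d1 c q) * p +
    (c q * (2 * d1 b q - d2 c q) - b q * d1 c q)

/-- The geodesic field `V = (Δ, pΔ, M / 2)` in the coordinates `(t, x, p)`. -/
noncomputable def geodesicField (a b c : ℝ × ℝ → ℝ) (z : ℝ × ℝ × ℝ) : ℝ × ℝ × ℝ :=
  (discriminant a b c (z.1, z.2.1), z.2.2 * discriminant a b c (z.1, z.2.1),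
    geodesicCubic a b c (z.1, z.2.1) z.2.2 / 2)

/-- The coefficient `S` of the nonlinear term in the equation `2 η' = k η + (η² - ξ) S`, where
`k = Δ_t + p Δ_x`, which the geodesic field induces on `ξ = Δ` and `η = a p + b`. -/
noncomputable def nodeRemainder (a b c : ℝ × ℝ → ℝ) (q : ℝ × ℝ) (p : ℝ) : ℝ :=
  (a q * p + b q) * slopeDeriv a q p / a q - (d2 a q * p ^ 2 + 2 * d2 b q * p + d2 c q)

/-- The coordinates `ξ = Δ`, `η = a p + b`, `ζ = (x - x₀) - p₀ (t - t₀)` in which the geodesic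
field is a `2 : 1` node near the point `z₀ = (t₀, x₀, p₀)`. -/
def nodeChart (a b c : ℝ × ℝ → ℝ) (z₀ z : ℝ × ℝ × ℝ) : ℝ × ℝ × ℝ :=
  (discriminant a b c (z.1, z.2.1), a (z.1, z.2.1) * z.2.2 + b (z.1, z.2.1),
    (z.2.1 - z₀.2.1) - z₀.2.2 * (z.1 - z₀.1))

variable {a b c : ℝ × ℝ → ℝ} {q : ℝ × ℝ} {p : ℝ} {z₀ z : ℝ × ℝ × ℝ}

theorem slopeDeriv_eq_d1_add_mul_d2 (g : ℝ × ℝ → ℝ) (q : ℝ × ℝ) (p : ℝ) :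
    slopeDeriv g q p = d1 g q + p * d2 g q := by
  have hdir : ((1 : ℝ), p) = (1, 0) + p • (0, 1) := by simp
  rw [slopeDeriv, hdir, map_add, map_smul, smul_eq_mul, d1, d2]

theorem fderiv_apply_smul_slope (g : ℝ × ℝ → ℝ) (q : ℝ × ℝ) (s p : ℝ) :
    fderiv ℝ g q (s, p * s) = s * slopeDeriv g q p := by
  have hdir : (s, p * s) = s • ((1 : ℝ), p) := by simp [mul_comm]
  rw [slopeDeriv, hdir, map_smul, smul_eq_mul]

theorem slopeDeriv_discriminant (ha : DifferentiableAt ℝ a q) (hb : DifferentiableAt ℝ b q)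
    (hc : DifferentiableAt ℝ c q) (p : ℝ) :
    slopeDeriv (discriminant a b c) q p =
      2 * b q * slopeDeriv b q p - c q * slopeDeriv a q p - a q * slopeDeriv c q p := by
  have hderiv : HasFDerivAt (discriminant a b c) _ q :=
    (hb.hasFDerivAt.pow 2).sub (ha.hasFDerivAt.mul hc.hasFDerivAt)
  rw [slopeDeriv, hderiv.fderiv]
  simp [slopeDeriv]
  ring

theorem mul_geodesicCubic (ha : DifferentiableAt ℝ a q) (hb : DifferentiableAt ℝ b q)
    (hc : DifferentiableAt ℝ c q) (ha₀ : a q ≠ 0) (p : ℝ) :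
    a q * geodesicCubic a b c q p =
      slopeDeriv (discriminant a b c) q p * (a q * p + b q) +
        ((a q * p + b q) ^ 2 - discriminant a b c q) * nodeRemainder a b c q p -
      2 * discriminant a b c q * (p * slopeDeriv a q p + slopeDeriv b q p) := by
  rw [slopeDeriv_discriminant ha hb hc]
  simp only [nodeRemainder, slopeDeriv_eq_d1_add_mul_d2, geodesicCubic, discriminant]
  field_simp
  ring

theorem geodesicField_eq_zero (ha : DifferentiableAt ℝ a q) (hb : DifferentiableAt ℝ b q)
    (hc : DifferentiableAt ℝ c q) (ha₀ : a q ≠ 0)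
    (hΔ : discriminant a b c q = 0) (hp : a q * p + b q = 0) :
    geodesicField a b c (q.1, q.2, p) = 0 := by
  have hcubic : geodesicCubic a b c q p = 0 :=
    (mul_eq_zero.1 ((mul_geodesicCubic ha hb hc ha₀ p).trans (by simp [hΔ, hp]))).resolve_left ha₀
  simp [geodesicField, hΔ, hcubic]

theorem fderiv_nodeChart_apply (ha : DifferentiableAt ℝ a (z.1, z.2.1))
    (hb : DifferentiableAt ℝ b (z.1, z.2.1)) (hc : DifferentiableAt ℝ c (z.1, z.2.1))
    (v : ℝ × ℝ × ℝ) :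
    fderiv ℝ (nodeChart a b c z₀) z v =
      (fderiv ℝ (discriminant a b c) (z.1, z.2.1) (v.1, v.2.1),
        a (z.1, z.2.1) * v.2.2 + z.2.2 * fderiv ℝ a (z.1, z.2.1) (v.1, v.2.1) +
          fderiv ℝ b (z.1, z.2.1) (v.1, v.2.1),
        v.2.1 - z₀.2.2 * v.1) := by
  have hΔ : DifferentiableAt ℝ (discriminant a b c) (z.1, z.2.1) := (hb.pow 2).sub (ha.mul hc)
  have hbase : ∀ {g : ℝ × ℝ → ℝ}, DifferentiableAt ℝ g (z.1, z.2.1) →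
      HasFDerivAt (fun z : ℝ × ℝ × ℝ => g (z.1, z.2.1))
        (fderiv ℝ g (z.1, z.2.1) ∘L (ContinuousLinearMap.id ℝ ℝ).prodMap (.fst ℝ ℝ ℝ)) z :=
    fun hg => hg.hasFDerivAt.comp z
      ((ContinuousLinearMap.id ℝ ℝ).prodMap (.fst ℝ ℝ ℝ)).hasFDerivAt
  have hsnd : HasFDerivAt (fun z : ℝ × ℝ × ℝ => z.2) (.snd ℝ ℝ (ℝ × ℝ)) z := hasFDerivAt_snd
  have hζ := (hsnd.fst.sub_const z₀.2.1).sub ((hasFDerivAt_fst.sub_const z₀.1).const_mul z₀.2.2)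
  have hchart : HasFDerivAt (nodeChart a b c z₀) _ z :=
    (hbase hΔ).prodMk ((((hbase ha).mul hsnd.snd).add (hbase hb)).prodMk hζ)
  rw [hchart.fderiv]
  simp [Prod.map]

theorem isInvertible_fderiv_nodeChart (ha : DifferentiableAt ℝ a (z₀.1, z₀.2.1))
    (hb : DifferentiableAt ℝ b (z₀.1, z₀.2.1)) (hc : DifferentiableAt ℝ c (z₀.1, z₀.2.1))
    (ha₀ : a (z₀.1, z₀.2.1) ≠ 0)
    (hk : slopeDeriv (discriminant a b c) (z₀.1, z₀.2.1) z₀.2.2 ≠ 0) :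
    (fderiv ℝ (nodeChart a b c z₀) z₀).IsInvertible := by
  have hker : ∀ v, fderiv ℝ (nodeChart a b c z₀) z₀ v = 0 → v = 0 := by
    intro v hv
    simp only [fderiv_nodeChart_apply ha hb hc, Prod.mk_eq_zero, sub_eq_zero] at hv
    obtain ⟨hξ, hη, hζ⟩ := hv
    rw [hζ, fderiv_apply_smul_slope] at hξ
    have hv₁ : v.1 = 0 := (mul_eq_zero.1 hξ).resolve_right hk
    have hv₂ : v.2.1 = 0 := by rw [hζ, hv₁, mul_zero]
    have hv₃ : v.2.2 = 0 := by simpa [hv₁, hv₂, ha₀, Prod.mk_zero_zero] using hη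
    exact Prod.ext hv₁ (Prod.ext hv₂ hv₃)
  have hinj : Function.Injective (fderiv ℝ (nodeChart a b c z₀) z₀) :=
    (injective_iff_map_eq_zero _).2 hker
  exact ⟨(LinearEquiv.ofInjectiveEndo _ hinj).toContinuousLinearEquiv, by ext <;> rfl⟩

theorem fderiv_nodeChart_geodesicField (ha : DifferentiableAt ℝ a (z.1, z.2.1))
    (hb : DifferentiableAt ℝ b (z.1, z.2.1)) (hc : DifferentiableAt ℝ c (z.1, z.2.1))
    (ha₀ : a (z.1, z.2.1) ≠ 0) {k S ξ η ζ : ℝ}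
    (hk : k = slopeDeriv (discriminant a b c) (z.1, z.2.1) z.2.2) (hk₀ : k ≠ 0)
    (hS : S = nodeRemainder a b c (z.1, z.2.1) z.2.2)
    (hξηζ : nodeChart a b c z₀ z = (ξ, η, ζ)) :
    fderiv ℝ (nodeChart a b c z₀) z (geodesicField a b c z) =
      (k / 2) • (2 * ξ, η + η ^ 2 * (S / k) + ξ * -(S / k), ξ * (2 * (z.2.2 - z₀.2.2) / k)) := by
  have hcubic := mul_geodesicCubic ha hb hc ha₀ z.2.2
  rw [← hk, ← hS] at hcubic
  obtain ⟨rfl, rfl, -⟩ : _ = ξ ∧ _ = η ∧ _ = ζ := by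
    simpa only [nodeChart, Prod.mk.injEq] using hξηζ
  rw [fderiv_nodeChart_apply ha hb hc]
  simp only [geodesicField, fderiv_apply_smul_slope, ← hk, Prod.smul_mk, smul_eq_mul]
  refine Prod.ext ?_ (Prod.ext ?_ ?_)
  · ring
  · field_simp
    linear_combination hcubic
  · field_simp

theorem contDiffAt_comp_base {g : ℝ × ℝ → ℝ} {n : ℕ∞ω} (hg : ContDiffAt ℝ n g (z.1, z.2.1)) :
    ContDiffAt ℝ n (fun z : ℝ × ℝ × ℝ => g (z.1, z.2.1)) z :=
  hg.comp z (f := fun z : ℝ × ℝ × ℝ => (z.1, z.2.1)) (by fun_prop)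

theorem contDiffAt_fderiv_apply_base {g : ℝ × ℝ → ℝ} {v : ℝ × ℝ × ℝ → ℝ × ℝ}
    (hg : ContDiffAt ℝ ∞ g (z.1, z.2.1)) (hv : ContDiffAt ℝ ∞ v z) :
    ContDiffAt ℝ ∞ (fun z => fderiv ℝ g (z.1, z.2.1) (v z)) z :=
  ((hg.fderiv_right (m := ∞) (by simp)).comp z
    (f := fun z : ℝ × ℝ × ℝ => (z.1, z.2.1)) (by fun_prop)).clm_apply hv

theorem contDiffAt_discriminant {n : ℕ∞ω} (ha : ContDiffAt ℝ n a q) (hb : ContDiffAt ℝ n b q)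
    (hc : ContDiffAt ℝ n c q) : ContDiffAt ℝ n (discriminant a b c) q :=
  (hb.pow 2).sub (ha.mul hc)

theorem contDiffAt_slopeDeriv {g : ℝ × ℝ → ℝ} (hg : ContDiffAt ℝ ∞ g (z.1, z.2.1)) :
    ContDiffAt ℝ ∞ (fun z : ℝ × ℝ × ℝ => slopeDeriv g (z.1, z.2.1) z.2.2) z :=
  contDiffAt_fderiv_apply_base hg (by fun_prop)

theorem contDiffAt_nodeChart (ha : ContDiffAt ℝ ∞ a (z.1, z.2.1))
    (hb : ContDiffAt ℝ ∞ b (z.1, z.2.1)) (hc : ContDiffAt ℝ ∞ c (z.1, z.2.1)) :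
    ContDiffAt ℝ ∞ (nodeChart a b c z₀) z :=
  (contDiffAt_comp_base (contDiffAt_discriminant ha hb hc)).prodMk
    ((((contDiffAt_comp_base ha).mul (by fun_prop)).add (contDiffAt_comp_base hb)).prodMk
      (by fun_prop))

theorem contDiffAt_nodeRemainder (ha : ContDiffAt ℝ ∞ a (z.1, z.2.1))
    (hb : ContDiffAt ℝ ∞ b (z.1, z.2.1)) (hc : ContDiffAt ℝ ∞ c (z.1, z.2.1))
    (ha₀ : a (z.1, z.2.1) ≠ 0) :
    ContDiffAt ℝ ∞ (fun z : ℝ × ℝ × ℝ => nodeRemainder a b c (z.1, z.2.1) z.2.2) z := by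
  have hd2 : ∀ {g : ℝ × ℝ → ℝ}, ContDiffAt ℝ ∞ g (z.1, z.2.1) →
      ContDiffAt ℝ ∞ (fun z : ℝ × ℝ × ℝ => d2 g (z.1, z.2.1)) z := fun hg =>
    contDiffAt_fderiv_apply_base hg contDiffAt_const
  have hp : ContDiffAt ℝ ∞ (fun z : ℝ × ℝ × ℝ => z.2.2) z := by fun_prop
  exact (((((contDiffAt_comp_base ha).mul hp).add (contDiffAt_comp_base hb)).mul
    (contDiffAt_slopeDeriv ha)).div (contDiffAt_comp_base ha) ha₀).sub
    ((((hd2 ha).mul (hp.pow 2)).add ((contDiffAt_const.mul (hd2 hb)).mul hp)).add (hd2 hc))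

theorem orbEquiv_geodesicField_node {Dom : Set (ℝ × ℝ × ℝ)} (hDom : Dom ∈ 𝓝 z₀)
    (hsmooth : ∀ᶠ z in 𝓝 z₀, ContDiffAt ℝ ∞ a (z.1, z.2.1) ∧ ContDiffAt ℝ ∞ b (z.1, z.2.1) ∧
      ContDiffAt ℝ ∞ c (z.1, z.2.1))
    (hΔ : discriminant a b c (z₀.1, z₀.2.1) = 0) (ha₀ : a (z₀.1, z₀.2.1) ≠ 0)
    (hη : a (z₀.1, z₀.2.1) * z₀.2.2 + b (z₀.1, z₀.2.1) = 0)
    (hk : slopeDeriv (discriminant a b c) (z₀.1, z₀.2.1) z₀.2.2 ≠ 0) :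
    OrbEquiv Dom (geodesicField a b c) (fun y => (2 * y.1, y.2.1, 0)) z₀ 0 := by
  set k : ℝ × ℝ × ℝ → ℝ := fun z => slopeDeriv (discriminant a b c) (z.1, z.2.1) z.2.2
  set S : ℝ × ℝ × ℝ → ℝ := fun z => nodeRemainder a b c (z.1, z.2.1) z.2.2
  have hne : (∞ : ℕ∞ω) ≠ 0 := by simp
  obtain ⟨hsa, hsb, hsc⟩ := hsmooth.self_of_nhds
  have hk_smooth : ∀ᶠ z in 𝓝 z₀, ContDiffAt ℝ ∞ k z := hsmooth.mono fun z hz =>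
    contDiffAt_slopeDeriv (contDiffAt_discriminant hz.1 hz.2.1 hz.2.2)
  have ha_ne : ∀ᶠ z in 𝓝 z₀, a (z.1, z.2.1) ≠ 0 :=
    (contDiffAt_comp_base hsa).continuousAt.eventually_ne ha₀
  have hk_ne : ∀ᶠ z in 𝓝 z₀, k z ≠ 0 := hk_smooth.self_of_nhds.continuousAt.eventually_ne hk
  have hS_smooth : ∀ᶠ z in 𝓝 z₀, ContDiffAt ℝ ∞ S z := (hsmooth.and ha_ne).mono fun z hz =>
    contDiffAt_nodeRemainder hz.1.1 hz.1.2.1 hz.1.2.2 hz.2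
  have hσ : ∀ᶠ z in 𝓝 z₀, ContDiffAt ℝ ∞ (fun z => S z / k z) z := by
    filter_upwards [hS_smooth, hk_smooth, hk_ne] with z hS hk hkz using hS.div hk hkz
  refine orbEquiv_node_of_chart (χ := nodeChart a b c z₀) (β := fun z => S z / k z)
    (α := fun z => -(S z / k z)) (γ := fun z => 2 * (z.2.2 - z₀.2.2) / k z) (h := fun z => k z / 2)
    hDom (hsmooth.mono fun z hz => contDiffAt_nodeChart hz.1 hz.2.1 hz.2.2)
    (by simp [nodeChart, hΔ, hη])
    (isInvertible_fderiv_nodeChart (hsa.differentiableAt hne) (hsb.differentiableAt hne)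
      (hsc.differentiableAt hne) ha₀ hk)
    (hσ.mono fun z hz => hz.neg) hσ ?_ (hk_smooth.mono fun z hz => hz.div_const 2)
    (div_ne_zero hk two_ne_zero) ?_
  · filter_upwards [hk_smooth, hk_ne] with z hkz hkz₀
    exact ContDiffAt.div (by fun_prop) hkz hkz₀
  · filter_upwards [hsmooth, ha_ne, hk_ne] with z ⟨ha, hb, hc⟩ haz hkz
    exact fderiv_nodeChart_geodesicField (ha.differentiableAt hne) (hb.differentiableAt hne)
      (hc.differentiableAt hne) haz rfl hkz rfl rfl

end Metric

/-- Pseudo-Riemannian metric: at a parabolic point `q*` with isotropic direction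
`p₀ = −b/a`, the germ of `V = (Δ, pΔ, M/2)` at `(q*, p₀)` is `C^∞`-smoothly orbitally
equivalent to `ξ̇ = 2ξ, η̇ = η, ζ̇ = 0`. -/
theorem stmt16 (D : Set (ℝ × ℝ)) (hD : IsOpen D)
    (a b c : ℝ × ℝ → ℝ)
    (ha : ContDiffOn ℝ (⊤ : ℕ∞) a D) (hb : ContDiffOn ℝ (⊤ : ℕ∞) b D)
    (hc : ContDiffOn ℝ (⊤ : ℕ∞) c D)
    (Δ : ℝ × ℝ → ℝ) (hΔ : Δ = fun q => b q ^ 2 - a q * c q)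
    (μ₃ μ₂ μ₁ μ₀ : ℝ × ℝ → ℝ)
    (hμ₃ : μ₃ = fun q => a q * (d1 a q - 2 * d2 b q) + b q * d2 a q)
    (hμ₂ : μ₂ = fun q => b q * (3 * d1 a q - 2 * d2 b q) + c q * d2 a q - 2 * a q * d2 c q)
    (hμ₁ : μ₁ = fun q => b q * (2 * d1 b q - 3 * d2 c q) + 2 * c q * d1 a q - a q * d1 c q)
    (hμ₀ : μ₀ = fun q => c q * (2 * d1 b q - d2 c q) - b q * d1 c q)
    (M : ℝ × ℝ × ℝ → ℝ)
    (hM : M = fun z => μ₃ (z.1, z.2.1) * z.2.2 ^ 3 + μ₂ (z.1, z.2.1) * z.2.2 ^ 2 +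
      μ₁ (z.1, z.2.1) * z.2.2 + μ₀ (z.1, z.2.1))
    (V : ℝ × ℝ × ℝ → ℝ × ℝ × ℝ)
    (hV : V = fun z => (Δ (z.1, z.2.1), z.2.2 * Δ (z.1, z.2.1), M z / 2))
    (q : ℝ × ℝ) (hq : q ∈ D)
    (hq1 : Δ q = 0) (hq2 : fderiv ℝ Δ q ≠ 0) (hq3 : a q ≠ 0)
    (hq4 : a q * d1 Δ q - b q * d2 Δ q ≠ 0)
    (p₀ : ℝ) (hp₀ : p₀ = -(b q) / a q) :
    V (q.1, q.2, p₀) = 0 ∧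
    OrbEquiv {z : ℝ × ℝ × ℝ | (z.1, z.2.1) ∈ D} V
      (fun y : ℝ × ℝ × ℝ => (2 * y.1, y.2.1, (0 : ℝ))) (q.1, q.2, p₀) 0 := by
  obtain rfl : Δ = discriminant a b c := hΔ
  obtain rfl : V = geodesicField a b c := by
    subst hV hM hμ₃ hμ₂ hμ₁ hμ₀
    rfl
  have hsmooth : ∀ᶠ r in 𝓝 q, ContDiffAt ℝ ∞ a r ∧ ContDiffAt ℝ ∞ b r ∧ ContDiffAt ℝ ∞ c r :=
    (hD.eventually_mem hq).mono fun r hr =>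
      have hr := hD.mem_nhds hr
      ⟨ha.contDiffAt hr, hb.contDiffAt hr, hc.contDiffAt hr⟩
  have hbase : Tendsto (fun z : ℝ × ℝ × ℝ => (z.1, z.2.1)) (𝓝 (q.1, q.2, p₀)) (𝓝 q) :=
    Continuous.tendsto' (by fun_prop) _ _ rfl
  have hη : a q * p₀ + b q = 0 := by rw [hp₀, mul_div_cancel₀ _ hq3, neg_add_cancel]
  have hk : slopeDeriv (discriminant a b c) q p₀ ≠ 0 := fun hk => hq4 <| by
    rw [slopeDeriv_eq_d1_add_mul_d2] at hk
    linear_combination a q * hk - d2 (discriminant a b c) q * hη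
  have hne : (∞ : ℕ∞ω) ≠ 0 := by simp
  obtain ⟨hsa, hsb, hsc⟩ := hsmooth.self_of_nhds
  exact ⟨geodesicField_eq_zero (hsa.differentiableAt hne) (hsb.differentiableAt hne)
      (hsc.differentiableAt hne) hq3 hq1 hη,
    orbEquiv_geodesicField_node (hbase (hD.mem_nhds hq)) (hbase.eventually hsmooth) hq1 hq3 hη hk⟩
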